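/- For any X ⊆ ω, if there exists an embedding of pcas of λη into K1^X, or of λ into K1^X, then the halting set K is Turing reducible to X. In particular, neither λ nor λη embeds into Kleene's first model K1 = K1^∅. -/

import Mathlib

namespace PCAEmb

/-! ### Oracle computability -/

/-- Codes for partial functions computable relative to an oracle. -/
inductive OCode : Type
  | zero : OCode
  | succ : OCode
  | left : OCode
  | right : OCode
  | oracle : OCode
  | pair : OCode → OCode → OCode
  | comp : OCode → OCode → OCode
  | prec : OCode → OCode → OCode
  | rfind' : OCode → OCode

/-- Evaluation of an oracle code, relative to a (partial) oracle `O`. -/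
def evalo (O : ℕ →. ℕ) : OCode → ℕ →. ℕ
  | .zero => pure 0
  | .succ => Nat.succ
  | .left => ↑fun n : ℕ => n.unpair.1
  | .right => ↑fun n : ℕ => n.unpair.2
  | .oracle => O
  | .pair cf cg => fun n => Nat.pair <$> evalo O cf n <*> evalo O cg n
  | .comp cf cg => fun n => evalo O cg n >>= evalo O cf
  | .prec cf cg =>
      Nat.unpaired fun a n =>
        n.rec (evalo O cf a) fun y IH => do
          let i ← IH
          evalo O cg (Nat.pair a (Nat.pair y i))
  | .rfind' cf =>
      Nat.unpaired fun a m =>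
        (Nat.rfind fun n => (fun x => x = 0) <$> evalo O cf (Nat.pair a (n + m))).map (· + m)

/-- The standard numbering of oracle codes. -/
def OCode.ofNat : ℕ → OCode
  | 0 => .zero
  | 1 => .succ
  | 2 => .left
  | 3 => .right
  | 4 => .oracle
  | n + 5 =>
    match n % 4 with
    | 0 => .pair (OCode.ofNat (n / 4).unpair.1) (OCode.ofNat (n / 4).unpair.2)
    | 1 => .comp (OCode.ofNat (n / 4).unpair.1) (OCode.ofNat (n / 4).unpair.2)
    | 2 => .prec (OCode.ofNat (n / 4).unpair.1) (OCode.ofNat (n / 4).unpair.2)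
    | _ => .rfind' (OCode.ofNat (n / 4).unpair.1)
  decreasing_by
    all_goals
      have h1 := Nat.unpair_left_le (n / 4)
      have h2 := Nat.unpair_right_le (n / 4)
      have h3 := Nat.div_le_self n 4
      omega

/-- The `e`-th Turing functional with oracle `O` : `Φ_e^O`. -/
def phi (O : ℕ →. ℕ) (e : ℕ) : ℕ →. ℕ := evalo O (OCode.ofNat e)

/-- The characteristic function of a set of naturals, as a (total) partial function. -/
noncomputable def chi (X : Set ℕ) : ℕ →. ℕ :=
  fun n => Part.some (X.indicator (fun _ => 1) n)

/-- `ψ` is partial computable relative to the oracle `O`. -/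
def RecursiveIn (O : ℕ →. ℕ) (ψ : ℕ →. ℕ) : Prop := ∃ c : OCode, evalo O c = ψ

/-- Turing reducibility of sets of naturals. -/
def TuringLE (X Y : Set ℕ) : Prop := RecursiveIn (chi Y) (chi X)

/-- A total function `d : ℕ → ℕ` is `Y`-computable. -/
def ComputableIn (Y : Set ℕ) (d : ℕ → ℕ) : Prop :=
  RecursiveIn (chi Y) (fun n => Part.some (d n))

/-- A binary relation on `ℕ` is `Y`-c.e. -/
def CEIn (Y : Set ℕ) (R : ℕ → ℕ → Prop) : Prop :=
  ∃ c : OCode, ∀ n m, R n m ↔ (evalo (chi Y) c (Nat.pair n m)).Dom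

/-- A set `W ⊆ ℕ` is `Y`-c.e. -/
def CE1In (Y : Set ℕ) (W : Set ℕ) : Prop :=
  ∃ c : OCode, ∀ n, n ∈ W ↔ (evalo (chi Y) c n).Dom

/-- The canonical finite set `D_u` with code `u` (binary coding). -/
def Du (u : ℕ) : Set ℕ := {k | u.testBit k}

/-- Enumeration reducibility: `Z ≤ₑ Y`. -/
def EnumLE (Z Y : Set ℕ) : Prop :=
  ∃ W : Set ℕ, CE1In ∅ W ∧ ∀ x, x ∈ Z ↔ ∃ u, Nat.pair x u ∈ W ∧ Du u ⊆ Y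

/-- The Turing jump `X'` of a set `X`. -/
def jump (X : Set ℕ) : Set ℕ := {e | (phi (chi X) e e).Dom}

/-- The halting set `K = {e : φ_e(e)↓}`. -/
def Khalt : Set ℕ := jump ∅

/-! ### Partial combinatory algebras -/

/-- `k·a·b` as a partial element. -/
def app2 {α : Type*} (app : α → α → Part α) (a b c : α) : Part α :=
  (app a b).bind fun x => app x c

/-- `s·a·b·c` as a partial element. -/
def app3 {α : Type*} (app : α → α → Part α) (a b c d : α) : Part α :=
  (app2 app a b c).bind fun x => app x d

/-- A partial applicative structure is a pca if it has (distinct) combinators `s` and `k`. -/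
def IsPCA {α : Type*} (app : α → α → Part α) : Prop :=
  ∃ s k : α, s ≠ k ∧
    (∀ a b : α, app2 app k a b = Part.some a) ∧
    (∀ a b : α, (app2 app s a b).Dom) ∧
    (∀ a b c : α,
      app3 app s a b c = (app a c).bind fun x => (app b c).bind fun y => app x y)

/-- An embedding of partial combinatory algebras: an injection that preserves
(defined) application. -/
def IsPCAEmbedding {α β : Type*} (appA : α → α → Part α) (appB : β → β → Part β)
    (f : α → β) : Prop :=
  Function.Injective f ∧ ∀ a a' c : α, c ∈ appA a a' → f c ∈ appB (f a) (f a')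

/-! ### Partial numberings -/

/-- `γ : ℕ ⇀ α` is a partial numbering (i.e. surjective). -/
def IsNumbering {α : Type*} (γ : ℕ →. α) : Prop := ∀ a : α, ∃ n, a ∈ γ n

/-- `d` is an `(a⊥, a⊤)`-decider for `X` with respect to `γ`. -/
def IsDecider {α : Type*} (γ : ℕ →. α) (abot atop : α) (X : Set ℕ) (d : ℕ → ℕ) : Prop :=
  ∀ n, (n ∉ X → γ (d n) = Part.some abot) ∧ (n ∈ X → γ (d n) = Part.some atop)

/-- `γ` has `Y`-c.e. inequivalence. -/
def CEInequiv {α : Type*} (Y : Set ℕ) (γ : ℕ →. α) : Prop :=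
  ∃ R : ℕ → ℕ → Prop, CEIn Y R ∧
    ∀ n m, (γ n).Dom → (γ m).Dom → (R n m ↔ γ n ≠ γ m)

/-- `γ` is a `Y`-effectively pca-valued partial numbering: the application is
represented on codes by a partial `Y`-computable function `ψ`. -/
def EffValued {α : Type*} (Y : Set ℕ) (app : α → α → Part α) (γ : ℕ →. α) : Prop :=
  ∃ ψ : ℕ →. ℕ, RecursiveIn (chi Y) ψ ∧
    ∀ (n m : ℕ) (a b c : α), a ∈ γ n → b ∈ γ m → c ∈ app a b →
      ∃ j, j ∈ ψ (Nat.pair n m) ∧ c ∈ γ j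

/-- `γ` is a strongly `Y`-effectively pca-valued partial numbering. -/
def StrongEffValued {α : Type*} (Y : Set ℕ) (app : α → α → Part α) (γ : ℕ →. α) : Prop :=
  ∃ ψ : ℕ →. ℕ, RecursiveIn (chi Y) ψ ∧
    (∀ (n m : ℕ) (a b c : α), a ∈ γ n → b ∈ γ m → c ∈ app a b →
      ∃ j, j ∈ ψ (Nat.pair n m) ∧ c ∈ γ j) ∧
    (∀ (n m k l : ℕ) (a b a' b' c : α), a ∈ γ n → b ∈ γ m → a' ∈ γ k → b' ∈ γ l →
      c ∈ app a b → c ∈ app a' b' → ψ (Nat.pair n m) = ψ (Nat.pair k l))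

/-! ### The models -/

/-- Kleene's first model relativized to `X`: application `n · m = Φ_n^X(m)`. -/
noncomputable def k1App (X : Set ℕ) : ℕ → ℕ → Part ℕ := fun n m => phi (chi X) n m

/-- A total function as a partial function. -/
def toPFun (g : ℕ → ℕ) : ℕ →. ℕ := fun n => Part.some (g n)

/-- Join `f ⊕ g` of two partial functions. -/
def pjoin (f g : ℕ →. ℕ) : ℕ →. ℕ := fun n =>
  if n % 2 = 0 then f (n / 2) else g (n / 2)

/-- The totalization of a partial function, as a partial element of `ℕ → ℕ`:
defined iff `ψ` is total. -/
def partToTotal (ψ : ℕ →. ℕ) : Part (ℕ → ℕ) :=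
  ⟨∀ n, (ψ n).Dom, fun H n => (ψ n).get (H n)⟩

/-- Application in Kleene's second model `K₂`: `g · h = Φ^{g⊕h}_{g 0}`,
defined iff this function is total. -/
def k2App (g h : ℕ → ℕ) : Part (ℕ → ℕ) :=
  partToTotal (phi (pjoin (toPFun g) (toPFun h)) (g 0))

/-- Application in van Oosten's sequential model `B`: `θ · ρ = Φ^{θ⊕ρ}_{θ 0}`
(always defined, as a partial function). -/
def bApp (θ ρ : ℕ →. ℕ) : Part (ℕ →. ℕ) :=
  Part.some (fun n => (θ 0).bind fun e => phi (pjoin θ ρ) e n)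

/-- Restriction of a partial applicative structure to a subset. -/
def subApp {α : Type*} (app : α → α → Part α) (P : α → Prop)
    (a b : Subtype P) : Part (Subtype P) :=
  (app a.1 b.1).bind fun c => Part.assert (P c) fun h => Part.some ⟨c, h⟩

/-- Carrier of `K₂^X` : the total `X`-computable functions. -/
def K2el (X : Set ℕ) : Type := {g : ℕ → ℕ // RecursiveIn (chi X) (toPFun g)}

/-- Application in `K₂^X`. -/
def k2XApp (X : Set ℕ) : K2el X → K2el X → Part (K2el X) :=
  subApp k2App _

/-- Carrier of `B^X` : the partial `X`-computable functions. -/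
def Bel (X : Set ℕ) : Type := {θ : ℕ →. ℕ // RecursiveIn (chi X) θ}

/-- Application in `B^X`. -/
def bXApp (X : Set ℕ) : Bel X → Bel X → Part (Bel X) :=
  subApp bApp _

/-- Application in Scott's graph model `G`. -/
def gApp (A B : Set ℕ) : Part (Set ℕ) :=
  Part.some {n | ∃ u, Nat.pair n u ∈ A ∧ Du u ⊆ B}

/-- Carrier of `G^Z` : the sets enumeration-reducible to `Z`. -/
def Gel (Z : Set ℕ) : Type := {A : Set ℕ // EnumLE A Z}

/-- Application in `G^Z`. -/
def gXApp (Z : Set ℕ) : Gel Z → Gel Z → Part (Gel Z) :=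
  subApp gApp _

/-- `X ⊕ X̄ = {2n : n ∈ X} ∪ {2n+1 : n ∉ X}`. -/
def joinCompl (X : Set ℕ) : Set ℕ :=
  {k | ∃ n, (k = 2 * n ∧ n ∈ X) ∨ (k = 2 * n + 1 ∧ n ∉ X)}

/-! ### The λ-calculus -/

/-- Untyped λ-terms (de Bruijn representation). -/
inductive Lam : Type
  | var : ℕ → Lam
  | app : Lam → Lam → Lam
  | abs : Lam → Lam

/-- Lift (shift up) the free variables `≥ d` of a term. -/
def Lam.lift : Lam → ℕ → Lam
  | .var n, d => if n < d then .var n else .var (n + 1)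
  | .app M N, d => .app (M.lift d) (N.lift d)
  | .abs M, d => .abs (M.lift (d + 1))

/-- Substitution `M[k := N]` (de Bruijn). -/
def Lam.subst : Lam → ℕ → Lam → Lam
  | .var n, k, N => if n = k then N else if k < n then .var (n - 1) else .var n
  | .app M M', k, N => .app (M.subst k N) (M'.subst k N)
  | .abs M, k, N => .abs (M.subst (k + 1) (N.lift 0))

/-- β-equivalence of λ-terms. -/
inductive BetaEq : Lam → Lam → Prop
  | beta (M N : Lam) : BetaEq (.app (.abs M) N) (M.subst 0 N)
  | refl (M : Lam) : BetaEq M M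
  | symm {M N : Lam} : BetaEq M N → BetaEq N M
  | trans {M N P : Lam} : BetaEq M N → BetaEq N P → BetaEq M P
  | appCongr {M M' N N' : Lam} :
      BetaEq M M' → BetaEq N N' → BetaEq (.app M N) (.app M' N')
  | absCongr {M M' : Lam} : BetaEq M M' → BetaEq (.abs M) (.abs M')

/-- βη-equivalence of λ-terms. -/
inductive BetaEtaEq : Lam → Lam → Prop
  | beta (M N : Lam) : BetaEtaEq (.app (.abs M) N) (M.subst 0 N)
  | eta (M : Lam) : BetaEtaEq (.abs (.app (M.lift 0) (.var 0))) M
  | refl (M : Lam) : BetaEtaEq M M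
  | symm {M N : Lam} : BetaEtaEq M N → BetaEtaEq N M
  | trans {M N P : Lam} : BetaEtaEq M N → BetaEtaEq N P → BetaEtaEq M P
  | appCongr {M M' N N' : Lam} :
      BetaEtaEq M M' → BetaEtaEq N N' → BetaEtaEq (.app M N) (.app M' N')
  | absCongr {M M' : Lam} : BetaEtaEq M M' → BetaEtaEq (.abs M) (.abs M')

def lamBetaSetoid : Setoid Lam := ⟨BetaEq, ⟨BetaEq.refl, BetaEq.symm, BetaEq.trans⟩⟩

def lamBetaEtaSetoid : Setoid Lam :=
  ⟨BetaEtaEq, ⟨BetaEtaEq.refl, BetaEtaEq.symm, BetaEtaEq.trans⟩⟩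

/-- The pca `λ` of λ-terms modulo β-equivalence. -/
def LamBeta : Type := Quotient lamBetaSetoid

/-- The pca `λη` of λ-terms modulo βη-equivalence. -/
def LamBetaEta : Type := Quotient lamBetaEtaSetoid

/-- Application in `λ` (total). -/
def lamBetaApp : LamBeta → LamBeta → Part LamBeta := fun a b =>
  Part.some (Quotient.map₂ Lam.app (fun _ _ h1 _ _ h2 => BetaEq.appCongr h1 h2) a b)

/-- Application in `λη` (total). -/
def lamBetaEtaApp : LamBetaEta → LamBetaEta → Part LamBetaEta := fun a b =>
  Part.some (Quotient.map₂ Lam.app (fun _ _ h1 _ _ h2 => BetaEtaEq.appCongr h1 h2) a b)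

/-!
An r.e. set `A` yields a closed term `W` such that `W n` reduces to the identity `I` if `n ∈ A` and
has an infinite head reduction otherwise. In the second case `W n` is not even βη-equal to `I`: in
a non-idempotent intersection type system typability is invariant under βη, and every head step
makes a derivation strictly smaller, so that a term with an infinite head reduction has no type,
whereas `I` has one. An embedding `f` into `K1^X` therefore decides `A` from `X`: iterating
`f(succ)` gives `f(n)`, one more application gives `f(W n)`, and `n ∈ A` iff `f(W n) = f(I)`.
Taking `A` to be the halting set, which is not computable, gives the theorem.
-/

section SumRel

variable {R S α β : Type*} [AddCommMonoid R] [AddCommMonoid S]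

/-- The additive extension of a relation `P` to multisets: `SumRel P ρ a` says that `ρ` is a sum
of elements which `P` relates, one by one, to the members of `a`. With `P` the typing relation of
a term, it says that the resources `ρ` type the term with every type of `a` at once. -/
def SumRel (P : R → α → Prop) (ρ : R) (a : Multiset α) : Prop :=
  ∃ m : Multiset R, Multiset.Rel P m a ∧ m.sum = ρ

variable {P : R → α → Prop} {ρ : R}

@[simp]
theorem sumRel_zero : SumRel P ρ 0 ↔ ρ = 0 := by
  simp [SumRel, Multiset.rel_zero_right, eq_comm]

theorem sumRel_cons {x : α} {a : Multiset α} :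
    SumRel P ρ (x ::ₘ a) ↔ ∃ ρ₁ ρ₂, P ρ₁ x ∧ SumRel P ρ₂ a ∧ ρ = ρ₁ + ρ₂ := by
  simp only [SumRel, Multiset.rel_cons_right]
  constructor
  · rintro ⟨_, ⟨ρ₁, m, hx, hm, rfl⟩, rfl⟩
    exact ⟨_, _, hx, ⟨m, hm, rfl⟩, m.sum_cons ρ₁⟩
  · rintro ⟨ρ₁, _, hx, ⟨m, hm, rfl⟩, rfl⟩
    exact ⟨_, ⟨ρ₁, m, hx, hm, rfl⟩, m.sum_cons ρ₁⟩

@[simp]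
theorem sumRel_singleton {x : α} : SumRel P ρ {x} ↔ P ρ x := by
  simpa using sumRel_cons (P := P) (ρ := ρ) (x := x) (a := 0)

theorem sumRel_add {a b : Multiset α} :
    SumRel P ρ (a + b) ↔ ∃ ρ₁ ρ₂, SumRel P ρ₁ a ∧ SumRel P ρ₂ b ∧ ρ = ρ₁ + ρ₂ := by
  simp only [SumRel, Multiset.rel_add_right]
  constructor
  · rintro ⟨_, ⟨m₁, m₂, h₁, h₂, rfl⟩, rfl⟩
    exact ⟨_, _, ⟨m₁, h₁, rfl⟩, ⟨m₂, h₂, rfl⟩, m₁.sum_add m₂⟩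
  · rintro ⟨_, _, ⟨m₁, h₁, rfl⟩, ⟨m₂, h₂, rfl⟩, rfl⟩
    exact ⟨_, ⟨m₁, m₂, h₁, h₂, rfl⟩, m₁.sum_add m₂⟩

theorem SumRel.add {ρ₁ ρ₂ : R} {a b : Multiset α} (h₁ : SumRel P ρ₁ a) (h₂ : SumRel P ρ₂ b) :
    SumRel P (ρ₁ + ρ₂) (a + b) :=
  sumRel_add.2 ⟨_, _, h₁, h₂, rfl⟩

theorem SumRel.transfer {Q : S → α → Prop} (r : AddSubmonoid (R × S))
    (h : ∀ ρ x, P ρ x → ∃ σ, Q σ x ∧ (ρ, σ) ∈ r) {a : Multiset α} (ha : SumRel P ρ a) :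
    ∃ σ, SumRel Q σ a ∧ (ρ, σ) ∈ r := by
  induction a using Multiset.induction_on generalizing ρ with
  | empty => exact ⟨0, by simp, sumRel_zero.1 ha ▸ r.zero_mem⟩
  | cons x a ih =>
    obtain ⟨ρ₁, ρ₂, hP, hPs, rfl⟩ := sumRel_cons.1 ha
    obtain ⟨σ₁, hQ, h₁⟩ := h _ _ hP
    obtain ⟨σ₂, hQs, h₂⟩ := ih hPs
    exact ⟨_, sumRel_cons.2 ⟨_, _, hQ, hQs, rfl⟩, r.add_mem h₁ h₂⟩

theorem sumRel_iff_of_additive {P' : S → α → Prop} {Q : S → β → Prop}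
    (l : R →+ Multiset β) (d : R →+ S)
    (h : ∀ σ x, P' σ x ↔ ∃ ρ τ, P ρ x ∧ SumRel Q τ (l ρ) ∧ σ = d ρ + τ)
    {σ : S} {a : Multiset α} :
    SumRel P' σ a ↔ ∃ ρ τ, SumRel P ρ a ∧ SumRel Q τ (l ρ) ∧ σ = d ρ + τ := by
  induction a using Multiset.induction_on generalizing σ with
  | empty => simp
  | cons x a ih =>
    simp only [sumRel_cons]
    constructor
    · rintro ⟨_, _, hx', ha', rfl⟩
      obtain ⟨ρ₁, τ₁, hx, h₁, rfl⟩ := (h _ _).1 hx'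
      obtain ⟨ρ₂, τ₂, ha, h₂, rfl⟩ := ih.1 ha'
      exact ⟨_, τ₁ + τ₂, ⟨ρ₁, ρ₂, hx, ha, rfl⟩, l.map_add ρ₁ ρ₂ ▸ h₁.add h₂,
        by rw [map_add]; abel⟩
    · rintro ⟨_, _, ⟨ρ₁, ρ₂, hx, ha, rfl⟩, hτ, rfl⟩
      obtain ⟨τ₁, τ₂, h₁, h₂, rfl⟩ := sumRel_add.1 (l.map_add ρ₁ ρ₂ ▸ hτ)
      exact ⟨_, _, (h _ _).2 ⟨ρ₁, τ₁, hx, h₁, rfl⟩, ih.2 ⟨ρ₂, τ₂, ha, h₂, rfl⟩,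
        by rw [map_add]; abel⟩

theorem sumRel_map_iff {P' : S → α → Prop} (d : R →+ S)
    (h : ∀ σ x, P' σ x ↔ ∃ ρ, P ρ x ∧ σ = d ρ) {σ : S} {a : Multiset α} :
    SumRel P' σ a ↔ ∃ ρ, SumRel P ρ a ∧ σ = d ρ := by
  simpa using sumRel_iff_of_additive (Q := P') (0 : R →+ Multiset α) d (by simpa using h)

end SumRel

/-! ### Typing with resources -/

/-- The resources consumed by a typing derivation: for each free variable the multiset of types at
which it is used, and the number of application and abstraction nodes of the derivation. -/
abbrev Resource : Type := (ℕ → Multiset ℕ) × ℕ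

namespace Resource

/-- One node of a derivation. -/
def tick : Resource := (0, 1)

/-- The variable `n` used once at each type of `a`. -/
def single (n : ℕ) (a : Multiset ℕ) : Resource := (Pi.single n a, 0)

/-- The types at which the variable `k` is used. -/
def lookup (k : ℕ) : Resource →+ Multiset ℕ where
  toFun ρ := ρ.1 k
  map_zero' := rfl
  map_add' _ _ := rfl

/-- Forget the variable `k`, and renumber the variables above it: the context change of
abstraction and substitution. -/
def drop (k : ℕ) : Resource →+ Resource where
  toFun ρ := (fun n => ρ.1 (if n < k then n else n + 1), ρ.2)
  map_zero' := rfl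
  map_add' _ _ := rfl

/-- Make room for an unused variable `k`: the context change of lifting. -/
def insert (k : ℕ) : Resource →+ Resource where
  toFun ρ := (fun n => if n < k then ρ.1 n else if n = k then 0 else ρ.1 (n - 1), ρ.2)
  map_zero' := by ext : 1 <;> simp; rfl
  map_add' ρ σ := by
    refine Prod.ext (funext fun n => ?_) rfl
    simp only [Prod.fst_add, Pi.add_apply]
    split_ifs <;> simp

variable (k n : ℕ) (ρ : Resource) (a : Multiset ℕ)

@[simp] theorem drop_tick : drop k tick = tick := rfl

@[simp] theorem lookup_tick : lookup k tick = 0 := rfl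

@[simp]
theorem insert_tick : insert k tick = tick := by
  ext n : 2 <;> simp [insert, tick]

@[simp]
theorem lookup_insert_self : lookup k (insert k ρ) = 0 := by simp [lookup, insert]

@[simp]
theorem lookup_zero_insert_succ : lookup 0 (insert (k + 1) ρ) = lookup 0 ρ := by
  simp [lookup, insert]

@[simp]
theorem lookup_drop_zero : lookup k (drop 0 ρ) = lookup (k + 1) ρ := by simp [lookup, drop]

@[simp]
theorem lookup_zero_drop_succ : lookup 0 (drop (k + 1) ρ) = lookup 0 ρ := by
  simp [lookup, drop]

@[simp]
theorem drop_insert_self : drop k (insert k ρ) = ρ := by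
  refine Prod.ext (funext fun n => ?_) rfl
  simp only [drop, insert, AddMonoidHom.coe_mk, ZeroHom.coe_mk]
  split_ifs <;> first | rfl | omega

theorem drop_zero_insert_succ : drop 0 (insert (k + 1) ρ) = insert k (drop 0 ρ) := by
  refine Prod.ext (funext fun n => ?_) rfl
  simp only [drop, insert, AddMonoidHom.coe_mk, ZeroHom.coe_mk, not_lt_zero, if_false,
    add_lt_add_iff_right, add_left_inj, add_tsub_cancel_right]
  split_ifs <;> try rfl
  rw [Nat.sub_add_cancel (by omega)]

theorem drop_zero_drop_succ : drop 0 (drop (k + 1) ρ) = drop k (drop 0 ρ) := by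
  refine Prod.ext (funext fun n => ?_) rfl
  simp only [drop, AddMonoidHom.coe_mk, ZeroHom.coe_mk]
  split_ifs <;> first | rfl | omega

@[simp]
theorem lookup_single_self : lookup k (single k a) = a := by simp [lookup, single]

variable {k n} in
theorem lookup_single_of_ne (h : k ≠ n) : lookup k (single n a) = 0 := by
  simp [lookup, single, h]

@[simp]
theorem drop_single_self : drop k (single k a) = 0 := by
  refine Prod.ext (funext fun n => ?_) rfl
  simp only [drop, single, AddMonoidHom.coe_mk, ZeroHom.coe_mk, Pi.single_apply]
  split_ifs <;> first | rfl | omega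

variable {k n} in
theorem drop_single_of_lt (h : n < k) : drop k (single n a) = single n a := by
  refine Prod.ext (funext fun m => ?_) rfl
  simp only [drop, single, AddMonoidHom.coe_mk, ZeroHom.coe_mk, Pi.single_apply]
  split_ifs <;> first | rfl | omega

variable {k n} in
theorem drop_single_of_gt (h : k < n) : drop k (single n a) = single (n - 1) a := by
  refine Prod.ext (funext fun m => ?_) rfl
  simp only [drop, single, AddMonoidHom.coe_mk, ZeroHom.coe_mk, Pi.single_apply]
  split_ifs <;> first | rfl | omega

theorem insert_single : insert k (single n a) = single (if n < k then n else n + 1) a := by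
  refine Prod.ext (funext fun m => ?_) rfl
  simp only [insert, single, AddMonoidHom.coe_mk, ZeroHom.coe_mk, Pi.single_apply]
  split_ifs <;> first | rfl | omega

theorem single_zero : single n 0 = 0 := by simp [single, Pi.single_zero]

theorem single_add (b : Multiset ℕ) : single n (a + b) = single n a + single n b := by
  simp [single, Pi.single_add]

end Resource

open Resource

/-- Types are natural numbers; `arrow (a, x)` codes the type of the functions that use their
argument once at each type of `a` and return a result of type `x`. Surjectivity of the coding makes
the typing invariant under η. -/
def arrow : Multiset ℕ × ℕ ≃ ℕ := Denumerable.eqv (Multiset ℕ × ℕ)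

/-- Non-idempotent intersection typing: `Typed M ρ x` says that `M` has type `x` by a derivation
consuming exactly the resources `ρ`. -/
def Typed : Lam → Resource → ℕ → Prop
  | .var n, ρ, x => ρ = single n {x}
  | .app M N, ρ, x => ∃ ρ₁ ρ₂ a,
      Typed M ρ₁ (arrow (a, x)) ∧ SumRel (Typed N) ρ₂ a ∧ ρ = ρ₁ + ρ₂ + tick
  | .abs M, ρ, y => ∃ ρ₁ x, Typed M ρ₁ x ∧ y = arrow (lookup 0 ρ₁, x) ∧ ρ = drop 0 ρ₁ + tick

section

variable {M N : Lam} {ρ : Resource} {n x : ℕ}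

@[simp]
theorem typed_var_iff : Typed (.var n) ρ x ↔ ρ = single n {x} := Iff.rfl

theorem typed_app_iff : Typed (.app M N) ρ x ↔ ∃ ρ₁ ρ₂ a,
    Typed M ρ₁ (arrow (a, x)) ∧ SumRel (Typed N) ρ₂ a ∧ ρ = ρ₁ + ρ₂ + tick := Iff.rfl

theorem typed_abs_iff : Typed (.abs M) ρ x ↔ ∃ ρ₁ y,
    Typed M ρ₁ y ∧ x = arrow (lookup 0 ρ₁, y) ∧ ρ = drop 0 ρ₁ + tick := Iff.rfl

end

theorem typed_lift_iff {M : Lam} {k : ℕ} {ρ : Resource} {x : ℕ} :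
    Typed (M.lift k) ρ x ↔ ∃ δ, Typed M δ x ∧ ρ = insert k δ := by
  induction M generalizing k ρ x with
  | var n =>
    simp only [Lam.lift, typed_var_iff, exists_eq_left, insert_single]
    split_ifs <;> rfl
  | app M N ihM ihN =>
    simp only [Lam.lift, typed_app_iff, ihM, sumRel_map_iff (insert k) (@ihN k)]
    constructor
    · rintro ⟨_, _, a, ⟨δ₁, hM, rfl⟩, ⟨δ₂, hN, rfl⟩, rfl⟩
      exact ⟨_, ⟨δ₁, δ₂, a, hM, hN, rfl⟩, by simp⟩
    · rintro ⟨_, ⟨δ₁, δ₂, a, hM, hN, rfl⟩, rfl⟩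
      exact ⟨_, _, a, ⟨δ₁, hM, rfl⟩, ⟨δ₂, hN, rfl⟩, by simp⟩
  | abs M ih =>
    simp only [Lam.lift, typed_abs_iff, ih]
    constructor
    · rintro ⟨_, y, ⟨δ, hM, rfl⟩, rfl, rfl⟩
      exact ⟨_, ⟨δ, y, hM, by simp, rfl⟩, by simp [drop_zero_insert_succ]⟩
    · rintro ⟨_, ⟨δ, y, hM, rfl, rfl⟩, rfl⟩
      exact ⟨_, y, ⟨δ, hM, rfl⟩, by simp, by simp [drop_zero_insert_succ]⟩

theorem typed_subst_var_iff {n k : ℕ} {N : Lam} {ρ : Resource} {x : ℕ} :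
    Typed ((Lam.var n).subst k N) ρ x ↔
      ∃ τ, SumRel (Typed N) τ (lookup k (single n {x})) ∧ ρ = drop k (single n {x}) + τ := by
  rcases lt_trichotomy n k with h | rfl | h
  · simp [Lam.subst, h.ne, h.not_gt, lookup_single_of_ne _ h.ne', drop_single_of_lt _ h]
  · simp [Lam.subst]
  · simp [Lam.subst, h.ne', h, lookup_single_of_ne _ h.ne, drop_single_of_gt _ h]

theorem typed_subst_iff {M N : Lam} {k : ℕ} {ρ : Resource} {x : ℕ} :
    Typed (M.subst k N) ρ x ↔
      ∃ ρ₁ τ, Typed M ρ₁ x ∧ SumRel (Typed N) τ (lookup k ρ₁) ∧ ρ = drop k ρ₁ + τ := by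
  induction M generalizing k N ρ x with
  | var n =>
    rw [typed_subst_var_iff]
    simp only [typed_var_iff, exists_and_left, exists_eq_left]
  | app M M' ihM ihM' =>
    simp only [Lam.subst, typed_app_iff, ihM,
      sumRel_iff_of_additive (lookup k) (drop k) (@ihM' N k)]
    constructor
    · rintro ⟨_, _, a, ⟨ρ₁, τ₁, hM, h₁, rfl⟩, ⟨ρ₂, τ₂, hM', h₂, rfl⟩, rfl⟩
      refine ⟨_, τ₁ + τ₂, ⟨ρ₁, ρ₂, a, hM, hM', rfl⟩, by simpa using h₁.add h₂, ?_⟩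
      simp only [map_add, drop_tick]
      abel
    · rintro ⟨_, τ, ⟨ρ₁, ρ₂, a, hM, hM', rfl⟩, hτ, rfl⟩
      simp only [map_add, lookup_tick, add_zero] at hτ
      obtain ⟨τ₁, τ₂, h₁, h₂, rfl⟩ := sumRel_add.1 hτ
      refine ⟨_, _, a, ⟨ρ₁, τ₁, hM, h₁, rfl⟩, ⟨ρ₂, τ₂, hM', h₂, rfl⟩, ?_⟩
      simp only [map_add, drop_tick]
      abel
  | abs M ih =>
    simp only [Lam.subst, typed_abs_iff, ih,
      sumRel_map_iff (insert 0) (@typed_lift_iff N 0)]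
    constructor
    · rintro ⟨_, y, ⟨ρ₁, _, hM, ⟨τ, hτ, rfl⟩, rfl⟩, rfl, rfl⟩
      refine ⟨_, τ, ⟨ρ₁, y, hM, by simp, rfl⟩, by simpa using hτ, ?_⟩
      simp only [map_add, drop_tick, drop_zero_drop_succ, drop_insert_self]
      abel
    · rintro ⟨_, τ, ⟨ρ₁, y, hM, rfl, rfl⟩, hτ, rfl⟩
      refine ⟨_, y, ⟨ρ₁, _, hM, ⟨τ, by simpa using hτ, rfl⟩, rfl⟩, by simp, ?_⟩
      simp only [map_add, drop_tick, drop_zero_drop_succ, drop_insert_self]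
      abel

theorem typed_beta_iff {M N : Lam} {ρ : Resource} {x : ℕ} :
    Typed (.app (.abs M) N) ρ x ↔ ∃ σ, Typed (M.subst 0 N) σ x ∧ ρ = σ + tick + tick := by
  simp only [typed_app_iff, typed_abs_iff, typed_subst_iff]
  constructor
  · rintro ⟨_, τ, a, ⟨ρ₁, y, hM, hy, rfl⟩, hN, rfl⟩
    obtain ⟨rfl, rfl⟩ := Prod.mk.inj (arrow.injective hy)
    exact ⟨_, ⟨ρ₁, τ, hM, hN, rfl⟩, by abel⟩
  · rintro ⟨_, ⟨ρ₁, τ, hM, hN, rfl⟩, rfl⟩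
    exact ⟨_, τ, _, ⟨ρ₁, x, hM, rfl, rfl⟩, hN, by abel⟩

theorem sumRel_typed_var_iff {n : ℕ} {ρ : Resource} {a : Multiset ℕ} :
    SumRel (Typed (.var n)) ρ a ↔ ρ = single n a := by
  induction a using Multiset.induction_on generalizing ρ with
  | empty => simp [single_zero]
  | cons x a ih => simp [sumRel_cons, ih, ← single_add]

theorem typed_eta_iff {M : Lam} {ρ : Resource} {x : ℕ} :
    Typed (.abs (.app (M.lift 0) (.var 0))) ρ x ↔ ∃ σ, Typed M σ x ∧ ρ = σ + tick + tick := by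
  simp only [typed_abs_iff, typed_app_iff, typed_lift_iff, sumRel_typed_var_iff]
  constructor
  · rintro ⟨_, y, ⟨_, _, a, ⟨σ, hM, rfl⟩, rfl, rfl⟩, rfl, rfl⟩
    exact ⟨σ, by simpa using hM, by simp⟩
  · rintro ⟨σ, hM, rfl⟩
    obtain ⟨⟨a, y⟩, rfl⟩ := arrow.surjective x
    exact ⟨_, y, ⟨_, _, a, ⟨σ, hM, rfl⟩, rfl, rfl⟩, by simp, by simp⟩

/-! ### Invariance of typing under βη-equivalence -/

/-- Every typing of `M` is matched by a typing of `N` of the same type whose resources are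
`r`-related. -/
def Simulates (r : AddSubmonoid (Resource × Resource)) (M N : Lam) : Prop :=
  ∀ ρ x, Typed M ρ x → ∃ σ, Typed N σ x ∧ (ρ, σ) ∈ r

/-- Pairs of resources with the same context. -/
def sameContext : AddSubmonoid (Resource × Resource) where
  carrier := {p | p.1.1 = p.2.1}
  zero_mem' := rfl
  add_mem' := congrArg₂ (· + ·)

/-- Pairs of resources whose second component comes from a derivation that is not larger. -/
def sizeLE : AddSubmonoid (Resource × Resource) where
  carrier := {p | p.2.2 ≤ p.1.2}
  zero_mem' := le_refl (0 : ℕ)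
  add_mem' := Nat.add_le_add

namespace Simulates

variable {r : AddSubmonoid (Resource × Resource)} {M M' N N' P : Lam}

theorem refl (h : ∀ ρ, (ρ, ρ) ∈ r) (M : Lam) : Simulates r M M := fun ρ _ hM => ⟨ρ, hM, h ρ⟩

theorem trans (h : ∀ {ρ σ τ}, (ρ, σ) ∈ r → (σ, τ) ∈ r → (ρ, τ) ∈ r) (h₁ : Simulates r M N)
    (h₂ : Simulates r N P) : Simulates r M P := by
  intro ρ x hM
  obtain ⟨σ, hN, hσ⟩ := h₁ ρ x hM
  obtain ⟨τ, hP, hτ⟩ := h₂ σ x hN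
  exact ⟨τ, hP, h hσ hτ⟩

theorem app (h : (tick, tick) ∈ r) (hM : Simulates r M M') (hN : Simulates r N N') :
    Simulates r (.app M N) (.app M' N') := by
  rintro _ x ⟨ρ₁, ρ₂, a, h₁, h₂, rfl⟩
  obtain ⟨σ₁, h₁, hσ₁⟩ := hM _ _ h₁
  obtain ⟨σ₂, h₂, hσ₂⟩ := h₂.transfer r hN
  exact ⟨_, ⟨σ₁, σ₂, a, h₁, h₂, rfl⟩, r.add_mem (r.add_mem hσ₁ hσ₂) h⟩

theorem abs (h : Simulates sameContext M N) : Simulates sameContext (.abs M) (.abs N) := by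
  rintro _ _ ⟨ρ, x, hM, rfl, rfl⟩
  obtain ⟨σ, hN, hσ : ρ.1 = σ.1⟩ := h _ _ hM
  refine ⟨_, ⟨σ, x, hN, ?_, rfl⟩, ?_⟩
  · simp [lookup, hσ]
  · simp [sameContext, drop, hσ]

end Simulates

theorem simulates_sameContext_of_typed_iff {M N : Lam}
    (h : ∀ {ρ x}, Typed M ρ x ↔ ∃ σ, Typed N σ x ∧ ρ = σ + tick + tick) :
    Simulates sameContext M N ∧ Simulates sameContext N M := by
  constructor
  · rintro _ x hM
    obtain ⟨σ, hN, rfl⟩ := h.1 hM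
    exact ⟨σ, hN, by simp [sameContext, tick]⟩
  · exact fun σ x hN => ⟨_, h.2 ⟨σ, hN, rfl⟩, by simp [sameContext, tick]⟩

theorem BetaEtaEq.simulates {M N : Lam} (h : BetaEtaEq M N) :
    Simulates sameContext M N ∧ Simulates sameContext N M := by
  induction h with
  | beta M N => exact simulates_sameContext_of_typed_iff typed_beta_iff
  | eta M => exact simulates_sameContext_of_typed_iff typed_eta_iff
  | refl M => exact and_self_iff.2 (.refl (fun _ => rfl) M)
  | symm _ ih => exact ih.symm
  | trans _ _ ih₁ ih₂ => exact ⟨ih₁.1.trans .trans ih₂.1, ih₂.2.trans .trans ih₁.2⟩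
  | appCongr _ _ ih₁ ih₂ => exact ⟨.app rfl ih₁.1 ih₂.1, .app rfl ih₁.2 ih₂.2⟩
  | absCongr _ ih => exact ⟨ih.1.abs, ih.2.abs⟩

theorem BetaEq.toBetaEtaEq {M N : Lam} (h : BetaEq M N) : BetaEtaEq M N := by
  induction h with
  | beta M N => exact .beta M N
  | refl M => exact .refl M
  | symm _ ih => exact ih.symm
  | trans _ _ ih₁ ih₂ => exact ih₁.trans ih₂
  | appCongr _ _ ih₁ ih₂ => exact ih₁.appCongr ih₂
  | absCongr _ ih => exact ih.absCongr

/-! ### Infinite head reductions -/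

local infixl:70 "⬝" => Lam.app

/-- Weak β-reduction: any number of contractions, none of them under an abstraction. -/
inductive Red : Lam → Lam → Prop
  | beta (M N : Lam) : Red (.abs M ⬝ N) (M.subst 0 N)
  | refl (M : Lam) : Red M M
  | trans {M N P : Lam} : Red M N → Red N P → Red M P
  | app {M M' N N' : Lam} : Red M M' → Red N N' → Red (M ⬝ N) (M' ⬝ N')

/-- One contraction of the leftmost redex of a term that is not an abstraction. -/
inductive HeadStep : Lam → Lam → Prop
  | beta (M N : Lam) : HeadStep (.abs M ⬝ N) (M.subst 0 N)
  | appLeft {M M' : Lam} (N : Lam) : HeadStep M M' → HeadStep (M ⬝ N) (M' ⬝ N)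

/-- Weak reduction whose first contraction is a head step. -/
def HeadRed : Lam → Lam → Prop := Relation.Comp HeadStep Red

namespace Red

variable {M M' N N' P : Lam}

instance : Trans Red Red Red := ⟨Red.trans⟩

theorem appLeft (h : Red M M') : Red (M ⬝ N) (M' ⬝ N) := h.app (.refl N)

theorem appRight (h : Red N N') : Red (M ⬝ N) (M ⬝ N') := (Red.refl M).app h

theorem betaEq (h : Red M N) : BetaEq M N := by
  induction h with
  | beta M N => exact .beta M N
  | refl M => exact .refl M
  | trans _ _ ih₁ ih₂ => exact ih₁.trans ih₂
  | app _ _ ih₁ ih₂ => exact ih₁.appCongr ih₂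

theorem simulates_sizeLE (h : Red M N) : Simulates sizeLE M N := by
  induction h with
  | beta M N =>
    intro ρ x h
    obtain ⟨σ, hσ, rfl⟩ := typed_beta_iff.1 h
    exact ⟨σ, hσ, by simp [sizeLE, add_assoc]⟩
  | refl M => exact .refl (fun ρ => le_refl ρ.2) M
  | trans _ _ ih₁ ih₂ => exact ih₁.trans (fun h₁ h₂ => Nat.le_trans h₂ h₁) ih₂
  | app _ _ ih₁ ih₂ => exact .app (le_refl tick.2) ih₁ ih₂

end Red

theorem HeadStep.exists_typed_lt {M N : Lam} (h : HeadStep M N) {ρ : Resource} {x : ℕ}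
    (hM : Typed M ρ x) : ∃ σ, Typed N σ x ∧ σ.2 < ρ.2 := by
  induction h generalizing ρ x with
  | beta M N =>
    obtain ⟨σ, hσ, rfl⟩ := typed_beta_iff.1 hM
    exact ⟨σ, hσ, by simp [tick, add_assoc]⟩
  | appLeft N _ ih =>
    obtain ⟨ρ₁, ρ₂, a, h₁, h₂, rfl⟩ := hM
    obtain ⟨σ, hσ, hlt⟩ := ih h₁
    exact ⟨_, ⟨σ, ρ₂, a, hσ, h₂, rfl⟩, by simpa using hlt⟩

namespace HeadRed

variable {M N P : Lam}

instance : Trans HeadRed Red HeadRed :=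
  ⟨fun ⟨P, hstep, hred⟩ hred' => ⟨P, hstep, hred.trans hred'⟩⟩

theorem beta (M N : Lam) : HeadRed (.abs M ⬝ N) (M.subst 0 N) := ⟨_, .beta M N, .refl _⟩

theorem appLeft (h : HeadRed M N) : HeadRed (M ⬝ P) (N ⬝ P) :=
  let ⟨Q, hstep, hred⟩ := h
  ⟨Q ⬝ P, hstep.appLeft P, hred.appLeft⟩

theorem red (h : HeadRed M N) : Red M N := by
  obtain ⟨P, hstep, hred⟩ := h
  refine .trans ?_ hred
  clear hred
  induction hstep with
  | beta M N => exact .beta M N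
  | appLeft _ _ ih => exact ih.appLeft

theorem exists_typed_lt (h : HeadRed M N) {ρ : Resource} {x : ℕ} (hM : Typed M ρ x) :
    ∃ σ, Typed N σ x ∧ σ.2 < ρ.2 := by
  obtain ⟨P, hstep, hred⟩ := h
  obtain ⟨σ, hP, hσ⟩ := hstep.exists_typed_lt hM
  obtain ⟨τ, hN, hτ⟩ := hred.simulates_sizeLE _ _ hP
  exact ⟨τ, hN, lt_of_le_of_lt hτ hσ⟩

theorem not_typed_of_infinite {t : ℕ → Lam} (h : ∀ n, HeadRed (t n) (t (n + 1))) (n : ℕ)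
    (ρ : Resource) (x : ℕ) : ¬ Typed (t n) ρ x := by
  induction hs : ρ.2 using Nat.strong_induction_on generalizing n ρ with
  | _ s ih =>
    intro hn
    obtain ⟨σ, hσ, hlt⟩ := (h n).exists_typed_lt hn
    exact ih _ (hs ▸ hlt) _ σ rfl hσ

end HeadRed

/-- The identity combinator. -/
def idTerm : Lam := .abs (.var 0)

theorem typed_idTerm (x : ℕ) : Typed idTerm tick (arrow ({x}, x)) :=
  ⟨single 0 {x}, x, rfl, by simp, by simp⟩

theorem BetaEtaEq.typed_of_idTerm {M : Lam} (h : BetaEtaEq M idTerm) : ∃ ρ x, Typed M ρ x := by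
  obtain ⟨ρ, hρ, -⟩ := h.simulates.2 _ _ (typed_idTerm 0)
  exact ⟨ρ, _, hρ⟩

theorem HeadRed.not_betaEtaEq_idTerm {t : ℕ → Lam} (h : ∀ n, HeadRed (t n) (t (n + 1)))
    (n : ℕ) : ¬ BetaEtaEq (t n) idTerm := by
  intro hn
  obtain ⟨ρ, x, hx⟩ := hn.typed_of_idTerm
  exact not_typed_of_infinite h n ρ x hx

/-! ### λ-definability of the primitive recursive functions -/

attribute [local simp] Lam.lift Lam.subst

/-- A term without free variables, expressed by its invariance under lifting and substitution. -/
class Closed (M : Lam) : Prop where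
  lift_eq : ∀ k, M.lift k = M
  subst_eq : ∀ k N, M.subst k N = M

attribute [local simp] Closed.lift_eq Closed.subst_eq

instance (M N : Lam) [Closed M] [Closed N] : Closed (M ⬝ N) := by
  constructor <;> simp

instance : Closed idTerm := by constructor <;> simp [idTerm]

section

variable {B M N P Q : Lam}

theorem Red.beta_of_eq (h : B.subst 0 M = Q) : Red (.abs B ⬝ M) Q := h ▸ .beta B M

theorem Red.beta₂_of_eq (h : (B.subst 1 (M.lift 0)).subst 0 N = Q) :
    Red (.abs (.abs B) ⬝ M ⬝ N) Q :=
  (Red.beta (.abs B) M).appLeft.trans (.beta_of_eq h)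

theorem HeadRed.beta₃_of_eq
    (h : ((B.subst 2 ((M.lift 0).lift 0)).subst 1 (N.lift 0)).subst 0 P = Q) :
    HeadRed (.abs (.abs (.abs B)) ⬝ M ⬝ N ⬝ P) Q :=
  Trans.trans (HeadRed.beta (.abs (.abs B)) M).appLeft.appLeft (Red.beta₂_of_eq h)

end

/-- The numeral `n` is its own recursor: `num 0 ⬝ a ⬝ s = a` and
`num (n + 1) ⬝ a ⬝ s = s ⬝ num n ⬝ (num n ⬝ a ⬝ s)`. -/
def num : ℕ → Lam
  | 0 => .abs (.abs (.var 1))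
  | n + 1 => .abs (.abs (.var 0 ⬝ num n ⬝ (num n ⬝ .var 1 ⬝ .var 0)))

instance (n : ℕ) : Closed (num n) := by
  induction n with
  | zero => constructor <;> simp [num]
  | succ n ih => constructor <;> simp [num]

/-- The successor combinator. -/
def succTerm : Lam := .abs (.abs (.abs (.var 0 ⬝ .var 2 ⬝ (.var 2 ⬝ .var 1 ⬝ .var 0))))

instance : Closed succTerm := by constructor <;> simp [succTerm]

theorem red_succTerm (n : ℕ) : Red (succTerm ⬝ num n) (num (n + 1)) :=
  .beta_of_eq (by simp [num])

section

variable {A S : Lam} [Closed A]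

theorem red_num_zero : Red (num 0 ⬝ A ⬝ S) A := .beta₂_of_eq (by simp)

theorem red_num_succ (n : ℕ) : Red (num (n + 1) ⬝ A ⬝ S) (S ⬝ num n ⬝ (num n ⬝ A ⬝ S)) :=
  .beta₂_of_eq (by simp)

theorem red_num_rec {a : ℕ} {s : ℕ → ℕ → ℕ} (hA : Red A (num a))
    (hS : ∀ x r, Red (S ⬝ num x ⬝ num r) (num (s x r))) (n : ℕ) :
    Red (num n ⬝ A ⬝ S) (num (Nat.rec a s n)) := by
  induction n with
  | zero => exact red_num_zero.trans hA
  | succ n ih => exact (red_num_succ n).trans (ih.appRight.trans (hS n _))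

end

/-- The Church pair of `M` and `N`. -/
def consTerm (M N : Lam) : Lam := .abs (.var 0 ⬝ M ⬝ N)

/-- The pairing combinator. -/
def pairTerm : Lam := .abs (.abs (.abs (.var 0 ⬝ .var 2 ⬝ .var 1)))

/-- The first projection of Church pairs. -/
def headTerm : Lam := .abs (.var 0 ⬝ .abs (.abs (.var 1)))

/-- The second projection of Church pairs. -/
def tailTerm : Lam := .abs (.var 0 ⬝ .abs (.abs (.var 0)))

instance : Closed pairTerm := by constructor <;> simp [pairTerm]

instance : Closed headTerm := by constructor <;> simp [headTerm]

instance : Closed tailTerm := by constructor <;> simp [tailTerm]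

section

variable {M N : Lam} [Closed M] [Closed N]

instance : Closed (consTerm M N) := by constructor <;> simp [consTerm]

theorem red_pairTerm : Red (pairTerm ⬝ M ⬝ N) (consTerm M N) :=
  .beta₂_of_eq (by simp [consTerm])

theorem red_consTerm {B Q : Lam} (h : (B.subst 1 M).subst 0 N = Q) :
    Red (consTerm M N ⬝ .abs (.abs B)) Q :=
  calc consTerm M N ⬝ .abs (.abs B)
    Red _ (.abs (.abs B) ⬝ M ⬝ N) := .beta_of_eq (by simp)
    Red _ Q := .beta₂_of_eq (by simpa using h)

theorem red_headTerm : Red (headTerm ⬝ consTerm M N) M :=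
  calc headTerm ⬝ consTerm M N
    Red _ (consTerm M N ⬝ .abs (.abs (.var 1))) := .beta_of_eq (by simp)
    Red _ M := red_consTerm (by simp)

theorem red_tailTerm : Red (tailTerm ⬝ consTerm M N) N :=
  calc tailTerm ⬝ consTerm M N
    Red _ (consTerm M N ⬝ .abs (.abs (.var 0))) := .beta_of_eq (by simp)
    Red _ N := red_consTerm (by simp)

end

/-- The representation of a list of numbers by iterated Church pairs of numerals. -/
def tuple : List ℕ → Lam
  | [] => idTerm
  | n :: l => consTerm (num n) (tuple l)

instance (l : List ℕ) : Closed (tuple l) := by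
  induction l with
  | nil => exact inferInstanceAs (Closed idTerm)
  | cons n l ih => exact inferInstanceAs (Closed (consTerm (num n) (tuple l)))

theorem red_pairTerm_tuple {M : Lam} {n : ℕ} {l : List ℕ} (h : Red M (tuple l)) :
    Red (pairTerm ⬝ num n ⬝ M) (tuple (n :: l)) :=
  h.appRight.trans red_pairTerm

section

variable {n : ℕ} (v : List.Vector ℕ (n + 1))

theorem red_headTerm_tuple : Red (headTerm ⬝ tuple v.toList) (num v.head) := by
  obtain ⟨x, w, rfl⟩ := v.exists_eq_cons
  simpa [tuple] using red_headTerm (M := num x) (N := tuple w.toList)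

theorem red_tailTerm_tuple : Red (tailTerm ⬝ tuple v.toList) (tuple v.tail.toList) := by
  obtain ⟨x, w, rfl⟩ := v.exists_eq_cons
  simpa [tuple] using red_tailTerm (M := num x) (N := tuple w.toList)

end

/-- The term `T` computes the function `f` on tuples of numerals. -/
def Represents {n : ℕ} (T : Lam) (f : List.Vector ℕ n → ℕ) : Prop :=
  ∀ v, Red (T ⬝ tuple v.toList) (num (f v))

/-- The function `f` is computed by a closed term. -/
def LambdaDefinable {n : ℕ} (f : List.Vector ℕ n → ℕ) : Prop := ∃ T, Closed T ∧ Represents T f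

/-- The combinator taking `L` to the tuple of the values `G i ⬝ L`. -/
def fanTerm : ∀ {n : ℕ}, (Fin n → Lam) → Lam
  | 0, _ => .abs idTerm
  | _ + 1, G => .abs (pairTerm ⬝ (G 0 ⬝ .var 0) ⬝ (fanTerm (fun i => G i.succ) ⬝ .var 0))

section

variable {n : ℕ} (G : Fin n → Lam) [∀ i, Closed (G i)]

instance : Closed (fanTerm G) := by
  induction n with
  | zero => constructor <;> simp [fanTerm]
  | succ n ih =>
    have := ih fun i => G i.succ
    constructor <;> simp [fanTerm]

theorem red_fanTerm {L : Lam} {g : Fin n → ℕ} (h : ∀ i, Red (G i ⬝ L) (num (g i))) :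
    Red (fanTerm G ⬝ L) (tuple (List.ofFn g)) := by
  induction n with
  | zero => exact .beta_of_eq (by simp [tuple])
  | succ n ih =>
    rw [List.ofFn_succ]
    calc fanTerm G ⬝ L
      Red _ (pairTerm ⬝ (G 0 ⬝ L) ⬝ (fanTerm (fun i => G i.succ) ⬝ L)) := .beta_of_eq (by simp)
      Red _ (pairTerm ⬝ num (g 0) ⬝ (fanTerm (fun i => G i.succ) ⬝ L)) := (h 0).appRight.appLeft
      Red _ (tuple (g 0 :: List.ofFn fun i => g i.succ)) :=
        red_pairTerm_tuple (ih _ fun i => h i.succ)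

end

namespace LambdaDefinable

theorem zero : LambdaDefinable fun _ : List.Vector ℕ 0 => 0 :=
  ⟨.abs (num 0), by constructor <;> simp, fun _ => .beta_of_eq (by simp)⟩

theorem succ : LambdaDefinable fun v : List.Vector ℕ 1 => v.head.succ :=
  ⟨.abs (succTerm ⬝ (headTerm ⬝ .var 0)), by constructor <;> simp, fun v =>
    calc .abs (succTerm ⬝ (headTerm ⬝ .var 0)) ⬝ tuple v.toList
      Red _ (succTerm ⬝ (headTerm ⬝ tuple v.toList)) := .beta_of_eq (by simp)
      Red _ (succTerm ⬝ num v.head) := (red_headTerm_tuple v).appRight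
      Red _ (num v.head.succ) := red_succTerm v.head⟩

theorem get {n : ℕ} (i : Fin n) : LambdaDefinable fun v : List.Vector ℕ n => v.get i := by
  induction n with
  | zero => exact i.elim0
  | succ n ih =>
    refine Fin.cases ⟨headTerm, inferInstance, fun v => ?_⟩ (fun i => ?_) i
    · simpa only [List.Vector.get_zero] using red_headTerm_tuple v
    · obtain ⟨T, _, hT⟩ := ih i
      refine ⟨.abs (T ⬝ (tailTerm ⬝ .var 0)), by constructor <;> simp, fun v => ?_⟩
      calc .abs (T ⬝ (tailTerm ⬝ .var 0)) ⬝ tuple v.toList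
        Red _ (T ⬝ (tailTerm ⬝ tuple v.toList)) := .beta_of_eq (by simp)
        Red _ (T ⬝ tuple v.tail.toList) := (red_tailTerm_tuple v).appRight
        Red _ (num (v.get i.succ)) := List.Vector.get_tail_succ v i ▸ hT v.tail

theorem comp {m n : ℕ} {f : List.Vector ℕ n → ℕ} {g : Fin n → List.Vector ℕ m → ℕ}
    (hf : LambdaDefinable f) (hg : ∀ i, LambdaDefinable (g i)) :
    LambdaDefinable fun v => f (List.Vector.ofFn fun i => g i v) := by
  obtain ⟨F, _, hF⟩ := hf
  choose G _ hG using hg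
  refine ⟨.abs (F ⬝ (fanTerm G ⬝ .var 0)), by constructor <;> simp, fun v => ?_⟩
  calc .abs (F ⬝ (fanTerm G ⬝ .var 0)) ⬝ tuple v.toList
    Red _ (F ⬝ (fanTerm G ⬝ tuple v.toList)) := .beta_of_eq (by simp)
    Red _ (F ⬝ tuple (List.Vector.ofFn fun i => g i v).toList) := by
      rw [List.Vector.toList_ofFn]
      exact (red_fanTerm G fun i => hG i v).appRight
    Red _ _ := hF _

/-- The step of a primitive recursion with step function `G` and parameters the tail of `L`. -/
def precStep (G L : Lam) : Lam :=
  .abs (.abs (G ⬝ (pairTerm ⬝ .var 1 ⬝ (pairTerm ⬝ .var 0 ⬝ (tailTerm ⬝ L)))))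

theorem red_precStep {n : ℕ} {g : List.Vector ℕ (n + 2) → ℕ} {G L : Lam} [Closed G] [Closed L]
    {v : List.Vector ℕ n} (hG : Represents G g) (hL : Red (tailTerm ⬝ L) (tuple v.toList))
    (x r : ℕ) : Red (precStep G L ⬝ num x ⬝ num r) (num (g (x ::ᵥ r ::ᵥ v))) :=
  calc precStep G L ⬝ num x ⬝ num r
    Red _ (G ⬝ (pairTerm ⬝ num x ⬝ (pairTerm ⬝ num r ⬝ (tailTerm ⬝ L)))) :=
      .beta₂_of_eq (by simp)
    Red _ (G ⬝ tuple (x ::ᵥ r ::ᵥ v).toList) := by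
      rw [List.Vector.toList_cons, List.Vector.toList_cons]
      exact (red_pairTerm_tuple (red_pairTerm_tuple hL)).appRight
    Red _ _ := hG _

theorem prec {n : ℕ} {f : List.Vector ℕ n → ℕ} {g : List.Vector ℕ (n + 2) → ℕ}
    (hf : LambdaDefinable f) (hg : LambdaDefinable g) :
    LambdaDefinable fun v : List.Vector ℕ (n + 1) =>
      v.head.rec (f v.tail) fun y IH => g (y ::ᵥ IH ::ᵥ v.tail) := by
  obtain ⟨F, _, hF⟩ := hf
  obtain ⟨G, _, hG⟩ := hg
  refine ⟨.abs (headTerm ⬝ .var 0 ⬝ (F ⬝ (tailTerm ⬝ .var 0)) ⬝ precStep G (.var 2)),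
    by constructor <;> simp [precStep], fun v => ?_⟩
  have hL := red_tailTerm_tuple v
  calc .abs (headTerm ⬝ .var 0 ⬝ (F ⬝ (tailTerm ⬝ .var 0)) ⬝ precStep G (.var 2)) ⬝ tuple v.toList
    Red _ (headTerm ⬝ tuple v.toList ⬝ (F ⬝ (tailTerm ⬝ tuple v.toList)) ⬝
        precStep G (tuple v.toList)) := .beta_of_eq (by simp [precStep])
    Red _ (num v.head ⬝ (F ⬝ (tailTerm ⬝ tuple v.toList)) ⬝ precStep G (tuple v.toList)) :=
      (red_headTerm_tuple v).appLeft.appLeft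
    Red _ _ := red_num_rec (hL.appRight.trans (hF _)) (red_precStep hG hL) v.head

end LambdaDefinable

theorem lambdaDefinable_of_primrec' {n : ℕ} {f : List.Vector ℕ n → ℕ} (hf : Nat.Primrec' f) :
    LambdaDefinable f := by
  induction hf with
  | zero => exact .zero
  | succ => exact .succ
  | get i => exact .get i
  | comp _ _ _ ihf ihg => exact .comp ihf ihg
  | prec _ _ ihf ihg => exact .prec ihf ihg

/-! ### Unbounded search -/

/-- `λ w n s. T ⟨n, s⟩ I (λ _ _. w w n (s + 1))`, which applied to itself is a loop through the
values of `s`: the numeral `T ⟨n, s⟩` selects `I` if it is zero, and otherwise applies the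
continuation `λ _ _. w w n (s + 1)` to two arguments. -/
def loopTerm (T : Lam) : Lam :=
  .abs (.abs (.abs (T ⬝ (pairTerm ⬝ .var 1 ⬝ (pairTerm ⬝ .var 0 ⬝ idTerm)) ⬝ idTerm ⬝
    .abs (.abs (.var 4 ⬝ .var 4 ⬝ .var 3 ⬝ (succTerm ⬝ .var 2))))))

/-- The search for a zero of `T ⟨n, ·⟩`, started at `s`. -/
def searchFrom (T : Lam) (n s : ℕ) : Lam := loopTerm T ⬝ loopTerm T ⬝ num n ⬝ num s

section

variable {T : Lam} [Closed T]

instance : Closed (loopTerm T) := by constructor <;> simp [loopTerm]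

theorem searchFrom_headRed {t : List.Vector ℕ 2 → ℕ} (hT : Represents T t) (n s : ℕ) :
    HeadRed (searchFrom T n s) (num (t (n ::ᵥ s ::ᵥ .nil)) ⬝ idTerm ⬝
      .abs (.abs (loopTerm T ⬝ loopTerm T ⬝ num n ⬝ (succTerm ⬝ num s)))) := by
  have hunfold : HeadRed (searchFrom T n s)
      (T ⬝ (pairTerm ⬝ num n ⬝ (pairTerm ⬝ num s ⬝ idTerm)) ⬝ idTerm ⬝
        .abs (.abs (loopTerm T ⬝ loopTerm T ⬝ num n ⬝ (succTerm ⬝ num s)))) :=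
    .beta₃_of_eq (by simp)
  have htuple : Red (pairTerm ⬝ num n ⬝ (pairTerm ⬝ num s ⬝ idTerm)) (tuple [n, s]) :=
    red_pairTerm_tuple (red_pairTerm_tuple (.refl _))
  exact Trans.trans hunfold (htuple.appRight.trans (hT (n ::ᵥ s ::ᵥ .nil))).appLeft.appLeft

theorem searchFrom_red_of_eq_zero {t : List.Vector ℕ 2 → ℕ} (hT : Represents T t) {n s : ℕ}
    (h : t (n ::ᵥ s ::ᵥ .nil) = 0) : Red (searchFrom T n s) idTerm :=
  (h ▸ searchFrom_headRed hT n s).red.trans red_num_zero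

theorem searchFrom_headRed_of_ne_zero {t : List.Vector ℕ 2 → ℕ} (hT : Represents T t) {n s : ℕ}
    (h : t (n ::ᵥ s ::ᵥ .nil) ≠ 0) : HeadRed (searchFrom T n s) (searchFrom T n (s + 1)) := by
  obtain ⟨m, hm⟩ := Nat.exists_eq_succ_of_ne_zero h
  calc HeadRed (searchFrom T n s) _ := hm ▸ searchFrom_headRed hT n s
    Red _ _ := red_num_succ m
    Red _ (loopTerm T ⬝ loopTerm T ⬝ num n ⬝ (succTerm ⬝ num s)) := .beta₂_of_eq (by simp)
    Red _ (searchFrom T n (s + 1)) := (red_succTerm s).appRight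

theorem searchFrom_red_idTerm {t : List.Vector ℕ 2 → ℕ} (hT : Represents T t) {n r s : ℕ}
    (hrs : r ≤ s) (h : t (n ::ᵥ s ::ᵥ .nil) = 0) : Red (searchFrom T n r) idTerm := by
  induction hrs using Nat.decreasingInduction with
  | self => exact searchFrom_red_of_eq_zero hT h
  | of_succ r _ ih =>
    by_cases hr : t (n ::ᵥ r ::ᵥ .nil) = 0
    · exact searchFrom_red_of_eq_zero hT hr
    · exact (searchFrom_headRed_of_ne_zero hT hr).red.trans ih

end

theorem exists_search_of_primrec' {t : List.Vector ℕ 2 → ℕ} (ht : Nat.Primrec' t) :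
    ∃ W, ∀ n, ((∃ s, t (n ::ᵥ s ::ᵥ .nil) = 0) → BetaEq (W ⬝ num n) idTerm) ∧
      (BetaEtaEq (W ⬝ num n) idTerm → ∃ s, t (n ::ᵥ s ::ᵥ .nil) = 0) := by
  obtain ⟨T, _, hT⟩ := lambdaDefinable_of_primrec' ht
  refine ⟨.abs (loopTerm T ⬝ loopTerm T ⬝ .var 0 ⬝ num 0), fun n => ?_⟩
  have hW : Red (.abs (loopTerm T ⬝ loopTerm T ⬝ .var 0 ⬝ num 0) ⬝ num n) (searchFrom T n 0) :=
    .beta_of_eq (by simp [searchFrom])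
  refine ⟨fun ⟨s, hs⟩ => (hW.trans (searchFrom_red_idTerm hT s.zero_le hs)).betaEq, fun h => ?_⟩
  by_contra! hn
  have hsearch (s : ℕ) : HeadRed (searchFrom T n s) (searchFrom T n (s + 1)) :=
    searchFrom_headRed_of_ne_zero hT (hn s)
  exact HeadRed.not_betaEtaEq_idTerm hsearch 0 (hW.betaEq.toBetaEtaEq.symm.trans h)

/-! ### Relative computability -/

section

variable {O f g : ℕ →. ℕ}

theorem RecursiveIn.pair (hf : RecursiveIn O f) (hg : RecursiveIn O g) :
    RecursiveIn O fun n => Nat.pair <$> f n <*> g n := by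
  obtain ⟨cf, rfl⟩ := hf
  obtain ⟨cg, rfl⟩ := hg
  exact ⟨.pair cf cg, rfl⟩

theorem RecursiveIn.comp (hf : RecursiveIn O f) (hg : RecursiveIn O g) :
    RecursiveIn O fun n => g n >>= f := by
  obtain ⟨cf, rfl⟩ := hf
  obtain ⟨cg, rfl⟩ := hg
  exact ⟨.comp cf cg, rfl⟩

theorem RecursiveIn.prec (hf : RecursiveIn O f) (hg : RecursiveIn O g) :
    RecursiveIn O (Nat.unpaired fun a n => n.rec (f a) fun y IH => do
      let i ← IH
      g (Nat.pair a (Nat.pair y i))) := by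
  obtain ⟨cf, rfl⟩ := hf
  obtain ⟨cg, rfl⟩ := hg
  exact ⟨.prec cf cg, rfl⟩

theorem RecursiveIn.rfind' (hf : RecursiveIn O f) :
    RecursiveIn O (Nat.unpaired fun a m =>
      (Nat.rfind fun n => (fun x => x = 0) <$> f (Nat.pair a (n + m))).map (· + m)) := by
  obtain ⟨cf, rfl⟩ := hf
  exact ⟨.rfind' cf, rfl⟩

theorem RecursiveIn.of_partrec (hf : Partrec f) : RecursiveIn O f := by
  obtain ⟨c, rfl⟩ := Nat.Partrec.Code.exists_code.1 (Partrec.nat_iff.1 hf)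
  clear hf
  induction c with
  | zero => exact ⟨.zero, rfl⟩
  | succ => exact ⟨.succ, rfl⟩
  | left => exact ⟨.left, rfl⟩
  | right => exact ⟨.right, rfl⟩
  | pair _ _ ih₁ ih₂ => exact ih₁.pair ih₂
  | comp _ _ ih₁ ih₂ => exact ih₁.comp ih₂
  | prec _ _ ih₁ ih₂ => exact ih₁.prec ih₂
  | rfind' _ ih => exact ih.rfind'

end

section

variable {X Y : Set ℕ} {d g : ℕ → ℕ} {f : ℕ →. ℕ}

theorem ComputableIn.of_computable (hd : Computable d) : ComputableIn X d :=
  RecursiveIn.of_partrec hd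

theorem RecursiveIn.comp_computableIn (hf : RecursiveIn (chi X) f) (hg : ComputableIn X g) :
    RecursiveIn (chi X) fun n => f (g n) :=
  (funext fun n => Part.bind_some (g n) f : (fun n => (Part.some (g n)).bind f) = _) ▸ hf.comp hg

theorem ComputableIn.of_recursiveIn (hf : RecursiveIn (chi X) f) (hg : ComputableIn X g)
    (h : ∀ n, d n ∈ f (g n)) : ComputableIn X d := by
  simpa only [ComputableIn, fun n => Part.eq_some_iff.2 (h n)] using hf.comp_computableIn hg

theorem ComputableIn.of_orbit (hf : RecursiveIn (chi X) f) (h : ∀ n, g (n + 1) ∈ f (g n)) :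
    ComputableIn X g := by
  have hsnd : Computable fun m : ℕ => m.unpair.2.unpair.2 :=
    (Primrec.snd.comp (Primrec.unpair.comp (Primrec.snd.comp Primrec.unpair))).to_comp
  have hstep : RecursiveIn (chi X) fun m => f m.unpair.2.unpair.2 :=
    hf.comp_computableIn (.of_computable hsnd)
  have hzero : ComputableIn X fun _ => g 0 := .of_computable (Computable.const _)
  have hpair : ComputableIn X (Nat.pair 0) :=
    .of_computable (Primrec₂.natPair.comp (Primrec.const 0) Primrec.id).to_comp
  refine .of_recursiveIn (hzero.prec hstep) hpair fun n => ?_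
  simp only [Nat.unpaired, Nat.unpair_pair]
  induction n with
  | zero => exact Part.mem_some _
  | succ n ih => exact Part.mem_bind ih (h n)

theorem TuringLE.ce1In_compl (h : TuringLE X Y) : CE1In Y Xᶜ := by
  have hdom : Partrec fun m : ℕ => bif decide (m = 0) then Part.some 0 else Part.none :=
    .cond (Primrec.eq.comp Primrec.id (Primrec.const 0)).decide.to_comp
      (Computable.const 0) Partrec.none
  obtain ⟨c, hc⟩ := (RecursiveIn.of_partrec hdom).comp h
  refine ⟨c, fun n => ?_⟩
  rw [hc]
  by_cases hn : n ∈ X <;> simp [chi, hn]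

end

theorem OCode.ofNat_surjective : Function.Surjective OCode.ofNat := by
  intro c
  induction c with
  | zero => exact ⟨0, by rw [ofNat]⟩
  | succ => exact ⟨1, by rw [ofNat]⟩
  | left => exact ⟨2, by rw [ofNat]⟩
  | right => exact ⟨3, by rw [ofNat]⟩
  | oracle => exact ⟨4, by rw [ofNat]⟩
  | pair _ _ iha ihb =>
    obtain ⟨⟨m, rfl⟩, ⟨n, rfl⟩⟩ := And.intro iha ihb
    exact ⟨4 * Nat.pair m n + 5, by rw [ofNat]; simp⟩
  | comp _ _ iha ihb =>
    obtain ⟨⟨m, rfl⟩, ⟨n, rfl⟩⟩ := And.intro iha ihb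
    exact ⟨4 * Nat.pair m n + 1 + 5, by rw [ofNat]; simp [Nat.mul_add_div]⟩
  | prec _ _ iha ihb =>
    obtain ⟨⟨m, rfl⟩, ⟨n, rfl⟩⟩ := And.intro iha ihb
    exact ⟨4 * Nat.pair m n + 2 + 5, by rw [ofNat]; simp [Nat.mul_add_div]⟩
  | rfind' _ ih =>
    obtain ⟨m, rfl⟩ := ih
    exact ⟨4 * Nat.pair m 0 + 3 + 5, by rw [ofNat]; simp [Nat.mul_add_div]⟩

theorem not_ce1In_compl_jump (Y : Set ℕ) : ¬ CE1In Y (jump Y)ᶜ := by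
  rintro ⟨c, hc⟩
  obtain ⟨e, rfl⟩ := OCode.ofNat_surjective c
  exact iff_not_self (hc e).symm

theorem not_jump_turingLE (Y : Set ℕ) : ¬ TuringLE (jump Y) Y :=
  fun h => not_ce1In_compl_jump Y h.ce1In_compl

/-! ### The halting set is recursively enumerable -/

open Nat.Partrec (Code)

/-- The oracle-free code obtained by answering every oracle query with `0`; it computes what
the given code computes relative to the empty set. -/
def OCode.dropOracle : OCode → Code
  | .zero => .zero
  | .succ => .succ
  | .left => .left
  | .right => .right
  | .oracle => .zero
  | .pair a b => .pair a.dropOracle b.dropOracle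
  | .comp a b => .comp a.dropOracle b.dropOracle
  | .prec a b => .prec a.dropOracle b.dropOracle
  | .rfind' a => .rfind' a.dropOracle

theorem OCode.eval_dropOracle (c : OCode) : c.dropOracle.eval = evalo (chi ∅) c := by
  induction c with
  | zero | succ | left | right => rfl
  | oracle => funext n; simp [dropOracle, Code.eval, evalo, chi]; rfl
  | pair _ _ iha ihb | comp _ _ iha ihb | prec _ _ iha ihb =>
    simp only [dropOracle, Code.eval, evalo, iha, ihb]
    rfl
  | rfind' _ ih =>
    simp only [dropOracle, Code.eval, evalo, ih]
    rfl

/-- The course-of-values recursion step computing `(OCode.ofNat e).dropOracle`, where `l` lists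
the values at all numbers below `e = l.length`. -/
def dropOracleStep (l : List Code) : Code :=
  let a := l.getD ((l.length - 5) / 4).unpair.1 .zero
  let b := l.getD ((l.length - 5) / 4).unpair.2 .zero
  if l.length < 5 then [.zero, .succ, .left, .right, .zero].getD l.length .zero
  else [.pair a b, .comp a b, .prec a b, .rfind' a].getD ((l.length - 5) % 4) .zero

theorem primrec_dropOracleStep : Primrec dropOracleStep := by
  have hlength : Primrec fun l : List Code => l.length := Primrec.list_length
  have hsub : Primrec fun l : List Code => l.length - 5 :=
    Primrec.nat_sub.comp hlength (Primrec.const 5)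
  have hunpair : Primrec fun l : List Code => ((l.length - 5) / 4).unpair :=
    Primrec.unpair.comp (Primrec.nat_div.comp hsub (Primrec.const 4))
  have ha : Primrec fun l : List Code => l.getD ((l.length - 5) / 4).unpair.1 .zero :=
    (Primrec.list_getD _).comp Primrec.id (Primrec.fst.comp hunpair)
  have hb : Primrec fun l : List Code => l.getD ((l.length - 5) / 4).unpair.2 .zero :=
    (Primrec.list_getD _).comp Primrec.id (Primrec.snd.comp hunpair)
  exact Primrec.ite (Primrec.nat_lt.comp hlength (Primrec.const 5))
    ((Primrec.list_getD _).comp (Primrec.const _) hlength)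
    ((Primrec.list_getD _).comp
      (Primrec.list_cons.comp (Code.primrec₂_pair.comp ha hb) <|
        Primrec.list_cons.comp (Code.primrec₂_comp.comp ha hb) <|
        Primrec.list_cons.comp (Code.primrec₂_prec.comp ha hb) <|
        Primrec.list_cons.comp (Code.primrec_rfind'.comp ha) (Primrec.const []))
      (Primrec.nat_mod.comp hsub (Primrec.const 4)))

theorem dropOracleStep_map_range (n : ℕ) :
    dropOracleStep ((List.range n).map fun e => (OCode.ofNat e).dropOracle) =
      (OCode.ofNat n).dropOracle := by
  rcases n with _ | _ | _ | _ | _ | n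
  iterate 5 simp [dropOracleStep, OCode.ofNat, OCode.dropOracle]
  have hleft : (n / 4).unpair.1 < n + 5 := by
    have := Nat.unpair_left_le (n / 4)
    omega
  have hright : (n / 4).unpair.2 < n + 5 := by
    have := Nat.unpair_right_le (n / 4)
    omega
  have hmod : n % 4 < 4 := Nat.mod_lt _ four_pos
  rw [show n + 1 + 1 + 1 + 1 + 1 = n + 5 from rfl, OCode.ofNat]
  simp only [dropOracleStep, List.length_map, List.length_range, Nat.add_sub_cancel,
    List.getD_eq_getElem?_getD, List.getElem?_map, List.getElem?_range, hleft, hright]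
  generalize n % 4 = r at hmod
  interval_cases r <;> simp [OCode.dropOracle]

theorem primrec_dropOracle_ofNat : Primrec fun e => (OCode.ofNat e).dropOracle :=
  (Primrec.nat_strong_rec (fun (_ : Unit) e => (OCode.ofNat e).dropOracle)
    (g := fun _ l => some (dropOracleStep l))
    (Primrec.option_some.comp (primrec_dropOracleStep.comp Primrec.snd))
    fun _ n => congrArg some (dropOracleStep_map_range n)).comp (Primrec.const ()) Primrec.id

theorem rePred_mem_khalt : REPred (· ∈ Khalt) := by
  have : Partrec fun e => (OCode.ofNat e).dropOracle.eval e :=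
    Code.eval_part.comp primrec_dropOracle_ofNat.to_comp Computable.id
  simp only [OCode.eval_dropOracle] at this
  exact this.dom_re

theorem exists_primrec'_of_rePred {p : ℕ → Prop} (hp : REPred p) :
    ∃ t : List.Vector ℕ 2 → ℕ, Nat.Primrec' t ∧ ∀ n, p n ↔ ∃ s, t (n ::ᵥ s ::ᵥ .nil) = 0 := by
  obtain ⟨c, hc⟩ := Code.exists_code.1 (Partrec.nat_iff.1 (hp.map (Computable.const 0).to₂))
  refine ⟨fun v => if (Code.evaln v.tail.head c v.head).isSome then 0 else 1,
    Nat.Primrec'.prim_iff.2 (Primrec.ite ?_ (Primrec.const 0) (Primrec.const 1)), fun n => ?_⟩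
  · exact Primrec.eq.comp (Primrec.option_isSome.comp <| Code.primrec_evaln.comp <| .pair
      (.pair (Primrec.vector_head.comp Primrec.vector_tail) (Primrec.const c))
      Primrec.vector_head) (Primrec.const true)
  · have hdom : p n ↔ (c.eval n).Dom := by simp [hc, Part.assert]
    simp only [hdom, Part.dom_iff_mem, Code.evaln_complete, List.Vector.head_cons,
      List.Vector.tail_cons, ite_eq_left_iff, one_ne_zero, imp_false, not_not,
      Option.isSome_iff_exists, Option.mem_def]
    exact exists_comm

theorem exists_search_of_rePred {p : ℕ → Prop} (hp : REPred p) :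
    ∃ W, ∀ n, (p n → BetaEq (W ⬝ num n) idTerm) ∧ (BetaEtaEq (W ⬝ num n) idTerm → p n) := by
  obtain ⟨t, ht, hpt⟩ := exists_primrec'_of_rePred hp
  simpa only [hpt] using exists_search_of_primrec' ht

/-! ### Embeddings into Kleene's first model -/

theorem turingLE_of_rePred {A X : Set ℕ} (hA : REPred (· ∈ A)) {F : Lam → ℕ}
    (hF : ∀ M N, F (M ⬝ N) ∈ k1App X (F M) (F N)) (hβ : ∀ M N, BetaEq M N → F M = F N)
    (hβη : ∀ M N, F M = F N → BetaEtaEq M N) : TuringLE A X := by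
  classical
  obtain ⟨W, hW⟩ := exists_search_of_rePred hA
  have hmem (n : ℕ) : n ∈ A ↔ F (W ⬝ num n) = F idTerm :=
    ⟨fun h => hβ _ _ ((hW n).1 h), fun h => (hW n).2 (hβη _ _ h)⟩
  have hnum : ComputableIn X fun n => F (num n) :=
    .of_orbit ⟨OCode.ofNat (F succTerm), rfl⟩ fun n =>
      hβ _ _ (red_succTerm n).betaEq ▸ hF succTerm (num n)
  have hsearch : ComputableIn X fun n => F (W ⬝ num n) :=
    .of_recursiveIn ⟨OCode.ofNat (F W), rfl⟩ hnum fun n => hF W (num n)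
  have htest : Computable fun m => if m = F idTerm then 1 else 0 :=
    (Primrec.ite (Primrec.eq.comp Primrec.id (Primrec.const _)) (Primrec.const 1)
      (Primrec.const 0)).to_comp
  refine ComputableIn.of_recursiveIn (ComputableIn.of_computable htest) hsearch fun n => ?_
  simp only [Part.mem_some_iff, ← hmem, Set.indicator_apply]

theorem turingLE_of_lamBetaEta_embedding {X : Set ℕ} {f : LamBetaEta → ℕ}
    (hf : IsPCAEmbedding lamBetaEtaApp (k1App X) f) : TuringLE Khalt X :=
  turingLE_of_rePred (F := fun M => f (Quotient.mk lamBetaEtaSetoid M)) rePred_mem_khalt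
    (fun _ _ => hf.2 _ _ _ (Part.mem_some _))
    (fun _ _ h => congrArg f (Quotient.sound (s := lamBetaEtaSetoid) h.toBetaEtaEq))
    (fun _ _ h => Quotient.exact (s := lamBetaEtaSetoid) (hf.1 h))

theorem turingLE_of_lamBeta_embedding {X : Set ℕ} {f : LamBeta → ℕ}
    (hf : IsPCAEmbedding lamBetaApp (k1App X) f) : TuringLE Khalt X :=
  turingLE_of_rePred (F := fun M => f (Quotient.mk lamBetaSetoid M)) rePred_mem_khalt
    (fun _ _ => hf.2 _ _ _ (Part.mem_some _))
    (fun _ _ h => congrArg f (Quotient.sound (s := lamBetaSetoid) h))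
    (fun _ _ h => BetaEq.toBetaEtaEq (Quotient.exact (s := lamBetaSetoid) (hf.1 h)))

theorem stmt5 :
    (∀ X : Set ℕ,
      ((∃ f : LamBetaEta → ℕ, IsPCAEmbedding lamBetaEtaApp (k1App X) f) ∨
       (∃ f : LamBeta → ℕ, IsPCAEmbedding lamBetaApp (k1App X) f)) →
      TuringLE Khalt X) ∧
    (¬ ∃ f : LamBeta → ℕ, IsPCAEmbedding lamBetaApp (k1App ∅) f) ∧
    (¬ ∃ f : LamBetaEta → ℕ, IsPCAEmbedding lamBetaEtaApp (k1App ∅) f) := by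
  refine ⟨?_, ?_, ?_⟩
  · rintro X (⟨f, hf⟩ | ⟨f, hf⟩)
    · exact turingLE_of_lamBetaEta_embedding hf
    · exact turingLE_of_lamBeta_embedding hf
  · rintro ⟨f, hf⟩
    exact not_jump_turingLE ∅ (turingLE_of_lamBeta_embedding hf)
  · rintro ⟨f, hf⟩
    exact not_jump_turingLE ∅ (turingLE_of_lamBetaEta_embedding hf)

end PCAEmb
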